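/- Let 0 ≤ α < 1 and let ν ≥ 0. Let j > 0 and j′ > 0 be two distinct zeros of J_ν, i.e. J_ν(j) = J_ν(j′) = 0 and j ≠ j′. Define Φ_j(x) = x^{(1−α)/2} · J_ν(j · x^{(2−α)/2}) and Φ_{j′}(x) = x^{(1−α)/2} · J_ν(j′ · x^{(2−α)/2}) for x ∈ (0,1). Then ∫₀¹ Φ_j(x) · Φ_{j′}(x) dx = 0. -/

import Mathlib

/-- The Bessel function of the first kind of order `ν`, defined by its power series:
`J_ν(x) = ∑_{m=0}^∞ ((-1)^m / (m! Γ(m+ν+1))) (x/2)^(2m+ν)`. -/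
noncomputable def besselJ (ν : ℝ) (x : ℝ) : ℝ :=
  ∑' m : ℕ, ((-1 : ℝ) ^ m / ((m.factorial : ℝ) * Real.Gamma ((m : ℝ) + ν + 1))) *
    (x / 2) ^ (2 * (m : ℝ) + ν)

open MeasureTheory

/-!
By the first-order relations `J_ν' = (ν / x) J_ν - J_{ν+1}` and
`J_{ν+1}' = J_ν - ((ν + 1) / x) J_{ν+1}`, the function
`u * (a J_{ν+1}(a u) J_ν(b u) - b J_ν(a u) J_{ν+1}(b u))` is an antiderivative of
`(a² - b²) u J_ν(a u) J_ν(b u)`. It tends to `0` at `0`, and vanishes at `u = 1` when `a` and `b`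
are zeros of `J_ν`. The substitution `u = x^((2-α)/2)` carries the integral of `Φ_j Φ_{j'}` to a
multiple of the integral of `u J_ν(j u) J_ν(j' u)`.
-/

open Filter Set Topology

section Calculus

theorem hasDerivAt_tsum_mul_pow {𝕜 : Type*} [RCLike 𝕜] {c : ℕ → 𝕜} {z R : 𝕜} (hz : ‖z‖ < ‖R‖)
    (hR : Summable fun n : ℕ => ‖((n : 𝕜) + 1) * c (n + 1) * R ^ n‖) :
    HasDerivAt (fun y => ∑' n, c n * y ^ n) (∑' n : ℕ, ((n : 𝕜) + 1) * c (n + 1) * z ^ n) z := by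
  have hbound : Summable fun n : ℕ => ‖c n * (n * R ^ (n - 1))‖ := by
    rw [← summable_nat_add_iff 1]
    refine hR.congr fun n => ?_
    push_cast [Nat.add_sub_cancel]
    ring_nf
  have hle : ∀ (n : ℕ), ∀ y ∈ Metric.ball (0 : 𝕜) ‖R‖,
      ‖c n * (n * y ^ (n - 1))‖ ≤ ‖c n * (n * R ^ (n - 1))‖ := by
    intro n y hy
    have hyR : ‖y‖ ≤ ‖R‖ := (mem_ball_zero_iff.1 hy).le
    simp only [norm_mul, norm_pow]
    gcongr
  have hzR : z ∈ Metric.ball (0 : 𝕜) ‖R‖ := mem_ball_zero_iff.2 hz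
  have hderiv_series : ∑' n : ℕ, c n * (n * z ^ (n - 1)) =
      ∑' n : ℕ, ((n : 𝕜) + 1) * c (n + 1) * z ^ n := by
    rw [(Summable.of_norm_bounded hbound fun n => hle n z hzR).tsum_eq_zero_add,
      Nat.cast_zero, zero_mul, mul_zero, zero_add]
    refine tsum_congr fun n => ?_
    push_cast [Nat.add_sub_cancel]
    ring
  have hsum_zero : Summable fun n : ℕ => c n * (0 : 𝕜) ^ n :=
    summable_of_ne_finset_zero (s := {0}) fun n hn => by
      rw [zero_pow (by simpa using hn), mul_zero]
  rw [← hderiv_series]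
  exact hasDerivAt_tsum_of_isPreconnected hbound Metric.isOpen_ball
    (convex_ball _ _).isPreconnected (fun n y _ => (hasDerivAt_pow n y).const_mul (c n)) hle
    (Metric.mem_ball_self ((norm_nonneg z).trans_lt hz)) hsum_zero hzR

theorem integral_Ioo_comp_rpow {E : Type*} [NormedAddCommGroup E] [NormedSpace ℝ E] {p r : ℝ}
    (hp : 0 < p) (hr : 0 ≤ r) (g : ℝ → E) :
    ∫ x in Ioo 0 r, (p * x ^ (p - 1)) • g (x ^ p) = ∫ y in Ioo 0 (r ^ p), g y := by
  rw [← Ioi_inter_Iio, ← Ioi_inter_Iio, ← setIntegral_indicator measurableSet_Iio,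
    ← setIntegral_indicator measurableSet_Iio,
    ← integral_comp_rpow_Ioi_of_pos (g := (Iio (r ^ p)).indicator g) hp]
  refine setIntegral_congr_fun measurableSet_Ioi fun x hx => ?_
  simp only [indicator, mem_Iio, Real.rpow_lt_rpow_iff (le_of_lt hx) hr hp, smul_ite, smul_zero]

end Calculus

section BesselClifford

/-- The coefficients `1 / (m! Γ(m + μ + 1))` of the Bessel–Clifford function `besselClifford`. -/
noncomputable def besselCliffordCoeff (μ : ℝ) (m : ℕ) : ℝ :=
  ((m.factorial : ℝ) * Real.Gamma ((m : ℝ) + μ + 1))⁻¹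

/-- The Bessel–Clifford function `C_μ(z) = ∑_{m=0}^∞ z^m / (m! Γ(m + μ + 1))`, the entire function
underlying `J_μ` through `J_μ(x) = (x/2)^μ C_μ(-x²/4)`. Mathlib's `Γ(s) = 0` at the poles, so that
`1 / Γ(s) = 0` there, makes this the usual function for every real `μ`. -/
noncomputable def besselClifford (μ z : ℝ) : ℝ := ∑' m : ℕ, besselCliffordCoeff μ m * z ^ m

theorem add_one_mul_besselCliffordCoeff_succ (μ : ℝ) (m : ℕ) :
    ((m : ℝ) + 1) * besselCliffordCoeff μ (m + 1) = besselCliffordCoeff (μ + 1) m := by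
  rw [besselCliffordCoeff, besselCliffordCoeff, Nat.factorial_succ]
  push_cast
  rw [show (m : ℝ) + 1 + μ + 1 = m + (μ + 1) + 1 by ring]
  field_simp

theorem besselCliffordCoeff_eq_mul_add_one (μ : ℝ) (m : ℕ) :
    besselCliffordCoeff μ m = ((m : ℝ) + μ + 1) * besselCliffordCoeff (μ + 1) m := by
  rw [besselCliffordCoeff, besselCliffordCoeff, ← add_assoc (m : ℝ) μ 1]
  rcases eq_or_ne ((m : ℝ) + μ + 1) 0 with h | h
  · rw [h, Real.Gamma_zero, mul_zero, inv_zero, zero_mul]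
  · rw [Real.Gamma_add_one h]
    field_simp

theorem summable_besselCliffordCoeff_mul_pow (μ z : ℝ) :
    Summable fun m => besselCliffordCoeff μ m * z ^ m := by
  refine summable_of_ratio_norm_eventually_le (r := 1 / 2) (by norm_num) ?_
  have hcoeff : ∀ m : ℕ, besselCliffordCoeff μ m =
      ((m : ℝ) + μ + 1) * (((m : ℝ) + 1) * besselCliffordCoeff μ (m + 1)) := fun m => by
    rw [add_one_mul_besselCliffordCoeff_succ, ← besselCliffordCoeff_eq_mul_add_one]
  filter_upwards [tendsto_natCast_atTop_atTop.eventually_ge_atTop (2 * |z|),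
    tendsto_natCast_atTop_atTop.eventually_ge_atTop (-μ)] with m hmz hmμ
  have hfactor : 2 * |z| ≤ ((m : ℝ) + μ + 1) * ((m : ℝ) + 1) := by nlinarith [abs_nonneg z]
  have hpos : 0 ≤ (m : ℝ) + μ + 1 := by linarith
  calc ‖besselCliffordCoeff μ (m + 1) * z ^ (m + 1)‖
      = 1 / 2 * (2 * |z| * (|besselCliffordCoeff μ (m + 1)| * |z| ^ m)) := by
        rw [norm_mul, norm_pow, Real.norm_eq_abs, Real.norm_eq_abs, pow_succ]
        ring
    _ ≤ 1 / 2 * (((m : ℝ) + μ + 1) * ((m : ℝ) + 1) *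
          (|besselCliffordCoeff μ (m + 1)| * |z| ^ m)) := by gcongr
    _ = 1 / 2 * ‖besselCliffordCoeff μ m * z ^ m‖ := by
        rw [hcoeff m, norm_mul, norm_mul, norm_mul, norm_pow, Real.norm_of_nonneg hpos,
          Real.norm_of_nonneg (by positivity : (0 : ℝ) ≤ m + 1), Real.norm_eq_abs,
          Real.norm_eq_abs]
        ring

theorem hasDerivAt_besselClifford (μ z : ℝ) :
    HasDerivAt (besselClifford μ) (besselClifford (μ + 1) z) z := by
  have hlt : ‖z‖ < ‖|z| + 1‖ := by
    rw [Real.norm_eq_abs, Real.norm_of_nonneg (by positivity)]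
    exact lt_add_one _
  have hderiv := hasDerivAt_tsum_mul_pow (c := besselCliffordCoeff μ) hlt (by
    simpa only [add_one_mul_besselCliffordCoeff_succ] using
      (summable_besselCliffordCoeff_mul_pow (μ + 1) (|z| + 1)).norm)
  simp only [add_one_mul_besselCliffordCoeff_succ] at hderiv
  exact hderiv

theorem continuous_besselClifford (μ : ℝ) : Continuous (besselClifford μ) :=
  continuous_iff_continuousAt.2 fun z => (hasDerivAt_besselClifford μ z).continuousAt

theorem besselClifford_eq_add (μ z : ℝ) :
    besselClifford μ z =
      z * besselClifford (μ + 2) z + (μ + 1) * besselClifford (μ + 1) z := by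
  have hsum := summable_besselCliffordCoeff_mul_pow μ z
  have hsum₁ := (summable_besselCliffordCoeff_mul_pow (μ + 1) z).mul_left (μ + 1)
  have hterm : ∀ m : ℕ, besselCliffordCoeff μ m * z ^ m
      - (μ + 1) * (besselCliffordCoeff (μ + 1) m * z ^ m)
      = m * (besselCliffordCoeff (μ + 1) m * z ^ m) := fun m => by
    rw [besselCliffordCoeff_eq_mul_add_one]
    ring
  rw [← sub_eq_iff_eq_add]
  calc besselClifford μ z - (μ + 1) * besselClifford (μ + 1) z
      = ∑' m : ℕ, (m : ℝ) * (besselCliffordCoeff (μ + 1) m * z ^ m) := by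
        rw [besselClifford, besselClifford, ← tsum_mul_left, ← hsum.tsum_sub hsum₁]
        exact tsum_congr hterm
    _ = ∑' m : ℕ, ((m + 1 : ℕ) : ℝ) * (besselCliffordCoeff (μ + 1) (m + 1) * z ^ (m + 1)) := by
        rw [Summable.tsum_eq_zero_add (by simpa only [hterm] using hsum.sub hsum₁),
          Nat.cast_zero, zero_mul, zero_add]
    _ = z * besselClifford (μ + 2) z := by
        rw [besselClifford, ← tsum_mul_left]
        refine tsum_congr fun m => ?_
        rw [show μ + 2 = μ + 1 + 1 by ring, ← add_one_mul_besselCliffordCoeff_succ (μ + 1)]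
        push_cast
        ring

end BesselClifford

section BesselJ

theorem besselJ_eq_rpow_mul_besselClifford (ν : ℝ) {x : ℝ} (hx : 0 < x) :
    besselJ ν x = (x / 2) ^ ν * besselClifford ν (-(x ^ 2 / 4)) := by
  rw [besselJ, besselClifford, ← tsum_mul_left]
  refine tsum_congr fun m => ?_
  have hpow : (x / 2) ^ (2 * (m : ℝ)) = (x ^ 2 / 4) ^ m := by
    rw [Real.rpow_mul (by positivity), Real.rpow_natCast, Real.rpow_two]
    ring
  rw [Real.rpow_add (by positivity), hpow, besselCliffordCoeff, neg_pow (x ^ 2 / 4)]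
  ring

theorem besselJ_add_besselJ_add_two (ν : ℝ) {x : ℝ} (hx : 0 < x) :
    besselJ ν x + besselJ (ν + 2) x = 2 * (ν + 1) / x * besselJ (ν + 1) x := by
  have hx2 : 0 < x / 2 := by positivity
  simp only [besselJ_eq_rpow_mul_besselClifford _ hx]
  rw [besselClifford_eq_add ν, Real.rpow_add hx2 ν 2, Real.rpow_add hx2 ν 1, Real.rpow_two,
    Real.rpow_one]
  field_simp
  ring

theorem hasDerivAt_besselJ (ν : ℝ) {x : ℝ} (hx : 0 < x) :
    HasDerivAt (besselJ ν) (ν / x * besselJ ν x - besselJ (ν + 1) x) x := by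
  have hx2 : 0 < x / 2 := by positivity
  have hpow : HasDerivAt (fun y : ℝ => (y / 2) ^ ν) (1 / 2 * ν * (x / 2) ^ (ν - 1)) x :=
    ((hasDerivAt_id x).div_const 2).rpow_const (Or.inl hx2.ne')
  have hsq : HasDerivAt (fun y : ℝ => -(y ^ 2 / 4)) (-(x / 2)) x := by
    refine (((hasDerivAt_pow 2 x).div_const 4).neg).congr_deriv ?_
    norm_num
    ring
  have hprod := hpow.mul ((hasDerivAt_besselClifford ν (-(x ^ 2 / 4))).comp x hsq)
  refine (hprod.congr_of_eventuallyEq ?_).congr_deriv ?_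
  · filter_upwards [lt_mem_nhds hx] with y hy
    exact besselJ_eq_rpow_mul_besselClifford ν hy
  · simp only [besselJ_eq_rpow_mul_besselClifford _ hx, Function.comp_apply]
    rw [Real.rpow_sub_one hx2.ne', Real.rpow_add_one hx2.ne']
    field_simp
    ring

theorem hasDerivAt_besselJ_add_one (ν : ℝ) {x : ℝ} (hx : 0 < x) :
    HasDerivAt (besselJ (ν + 1)) (besselJ ν x - (ν + 1) / x * besselJ (ν + 1) x) x := by
  refine (hasDerivAt_besselJ (ν + 1) hx).congr_deriv ?_
  rw [show ν + 1 + 1 = ν + 2 by ring]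
  linear_combination -besselJ_add_besselJ_add_two ν hx

theorem exists_continuous_besselJ_mul_eq (ν : ℝ) {a : ℝ} (ha : 0 < a) :
    ∃ h : ℝ → ℝ, Continuous h ∧ ∀ u, 0 < u → besselJ ν (a * u) = u ^ ν * h u := by
  have hcont := continuous_besselClifford ν
  refine ⟨fun u => (a / 2) ^ ν * besselClifford ν (-((a * u) ^ 2 / 4)), by fun_prop,
    fun u hu => ?_⟩
  rw [besselJ_eq_rpow_mul_besselClifford ν (by positivity), mul_div_right_comm,
    Real.mul_rpow (by positivity) hu.le]
  ring

theorem exists_continuous_mul_besselJ_mul_besselJ_eq (μ ν : ℝ) {a b : ℝ} (ha : 0 < a)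
    (hb : 0 < b) :
    ∃ h : ℝ → ℝ, Continuous h ∧
      ∀ u, 0 < u → u * (besselJ μ (a * u) * besselJ ν (b * u)) = u ^ (μ + ν + 1) * h u := by
  obtain ⟨f, hf, hJf⟩ := exists_continuous_besselJ_mul_eq μ ha
  obtain ⟨g, hg, hJg⟩ := exists_continuous_besselJ_mul_eq ν hb
  refine ⟨fun u => f u * g u, hf.mul hg, fun u hu => ?_⟩
  rw [hJf u hu, hJg u hu, Real.rpow_add_one hu.ne', Real.rpow_add hu]
  ring

theorem tendsto_mul_besselJ_mul_besselJ_zero {μ ν a b : ℝ} (hμν : -1 < μ + ν) (ha : 0 < a)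
    (hb : 0 < b) :
    Tendsto (fun u => u * (besselJ μ (a * u) * besselJ ν (b * u))) (𝓝[>] 0) (𝓝 0) := by
  obtain ⟨h, hcont, heq⟩ := exists_continuous_mul_besselJ_mul_besselJ_eq μ ν ha hb
  have hexp : 0 < μ + ν + 1 := by linarith
  have hlim : Tendsto (fun u => u ^ (μ + ν + 1) * h u) (𝓝[>] 0) (𝓝 0) := by
    refine (Continuous.tendsto' ?_ 0 0 ?_).mono_left nhdsWithin_le_nhds
    · exact (Real.continuous_rpow_const hexp.le).mul hcont
    · rw [Real.zero_rpow hexp.ne', zero_mul]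
  refine hlim.congr' ?_
  filter_upwards [self_mem_nhdsWithin] with u hu
  exact (heq u hu).symm

theorem intervalIntegrable_mul_besselJ_mul_besselJ {μ ν a b r : ℝ} (hμν : -2 < μ + ν)
    (ha : 0 < a) (hb : 0 < b) (hr : 0 ≤ r) :
    IntervalIntegrable (fun u => u * (besselJ μ (a * u) * besselJ ν (b * u))) volume 0 r := by
  obtain ⟨h, hcont, heq⟩ := exists_continuous_mul_besselJ_mul_besselJ_eq μ ν ha hb
  have hint : IntervalIntegrable (fun u => u ^ (μ + ν + 1) * h u) volume 0 r :=
    (intervalIntegral.intervalIntegrable_rpow' (by linarith)).mul_continuousOn hcont.continuousOn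
  refine hint.congr_uIoo fun u hu => ?_
  rw [uIoo_of_le hr] at hu
  exact (heq u hu.1).symm

end BesselJ

section Lommel

/-- The Wronskian of `u ↦ J_ν(a u)` and `u ↦ J_ν(b u)`, multiplied by `u`; it is written without
derivatives by means of `J_ν' = (ν / x) J_ν - J_{ν+1}`. -/
noncomputable def besselWronskian (ν a b u : ℝ) : ℝ :=
  a * (u * (besselJ (ν + 1) (a * u) * besselJ ν (b * u))) -
    b * (u * (besselJ (ν + 1) (b * u) * besselJ ν (a * u)))

theorem hasDerivAt_besselWronskian (ν : ℝ) {a b u : ℝ} (ha : 0 < a) (hb : 0 < b) (hu : 0 < u) :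
    HasDerivAt (besselWronskian ν a b)
      ((a ^ 2 - b ^ 2) * (u * (besselJ ν (a * u) * besselJ ν (b * u)))) u := by
  have hdil : ∀ c : ℝ, HasDerivAt (fun v => c * v) c u := fun c => hasDerivAt_const_mul c
  have hJ : ∀ c, 0 < c → HasDerivAt (fun v => besselJ ν (c * v))
      ((ν / (c * u) * besselJ ν (c * u) - besselJ (ν + 1) (c * u)) * c) u := fun c hc =>
    (hasDerivAt_besselJ ν (mul_pos hc hu)).comp u (hdil c)
  have hJ₁ : ∀ c, 0 < c → HasDerivAt (fun v => besselJ (ν + 1) (c * v))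
      ((besselJ ν (c * u) - (ν + 1) / (c * u) * besselJ (ν + 1) (c * u)) * c) u := fun c hc =>
    (hasDerivAt_besselJ_add_one ν (mul_pos hc hu)).comp u (hdil c)
  refine ((((hasDerivAt_id' u).mul ((hJ₁ a ha).mul (hJ b hb))).const_mul a).sub
    (((hasDerivAt_id' u).mul ((hJ₁ b hb).mul (hJ a ha))).const_mul b)).congr_deriv ?_
  simp only [Pi.mul_apply]
  field_simp
  ring

theorem tendsto_besselWronskian_zero {ν a b : ℝ} (hν : -1 < ν) (ha : 0 < a) (hb : 0 < b) :
    Tendsto (besselWronskian ν a b) (𝓝[>] 0) (𝓝 0) := by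
  have hexp : -1 < ν + 1 + ν := by linarith
  have hlim := ((tendsto_mul_besselJ_mul_besselJ_zero hexp ha hb).const_mul a).sub
    ((tendsto_mul_besselJ_mul_besselJ_zero hexp hb ha).const_mul b)
  simp only [mul_zero, sub_zero] at hlim
  exact hlim

theorem sq_sub_sq_mul_integral_besselJ_mul_besselJ {ν a b r : ℝ} (hν : -1 < ν) (ha : 0 < a)
    (hb : 0 < b) (hr : 0 < r) :
    (a ^ 2 - b ^ 2) * ∫ u in (0 : ℝ)..r, u * (besselJ ν (a * u) * besselJ ν (b * u)) =
      besselWronskian ν a b r := by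
  have hint : IntervalIntegrable (fun u => u * (besselJ ν (a * u) * besselJ ν (b * u)))
      volume 0 r :=
    intervalIntegrable_mul_besselJ_mul_besselJ (by linarith) ha hb hr.le
  have hleft : Tendsto (besselWronskian ν a b) (𝓝[<] r) (𝓝 (besselWronskian ν a b r)) :=
    (hasDerivAt_besselWronskian ν ha hb hr).continuousAt.tendsto.mono_left nhdsWithin_le_nhds
  rw [← intervalIntegral.integral_const_mul,
    intervalIntegral.integral_eq_sub_of_hasDerivAt_of_tendsto hr
      (fun u hu => hasDerivAt_besselWronskian ν ha hb hu.1) (hint.const_mul _)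
      (tendsto_besselWronskian_zero hν ha hb) hleft, sub_zero]

theorem integral_mul_besselJ_mul_besselJ_eq_zero {ν a b : ℝ} (hν : -1 < ν) (ha : 0 < a)
    (hb : 0 < b) (hJa : besselJ ν a = 0) (hJb : besselJ ν b = 0) (hab : a ≠ b) :
    ∫ u in Ioo (0 : ℝ) 1, u * (besselJ ν (a * u) * besselJ ν (b * u)) = 0 := by
  have hsq : a ^ 2 - b ^ 2 ≠ 0 := sub_ne_zero.2 fun h => hab ((sq_eq_sq₀ ha.le hb.le).1 h)
  have hlommel := sq_sub_sq_mul_integral_besselJ_mul_besselJ hν ha hb one_pos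
  have hwronskian : besselWronskian ν a b 1 = 0 := by
    simp only [besselWronskian, mul_one, hJa, hJb, mul_zero, sub_zero]
  rw [← integral_Ioc_eq_integral_Ioo, ← intervalIntegral.integral_of_le zero_le_one]
  exact (mul_eq_zero.1 (hlommel.trans hwronskian)).resolve_left hsq

end Lommel

theorem eigenfunctions_orthogonal_general {α ν j j' : ℝ} (hα : α < 2) (hν : -1 < ν) (hj : 0 < j)
    (hj' : 0 < j') (hzero : besselJ ν j = 0) (hzero' : besselJ ν j' = 0) (hne : j ≠ j') :
    (∫ x in Ioo (0 : ℝ) 1,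
      (x ^ ((1 - α) / 2) * besselJ ν (j * x ^ ((2 - α) / 2))) *
      (x ^ ((1 - α) / 2) * besselJ ν (j' * x ^ ((2 - α) / 2)))) = 0 := by
  set p := (2 - α) / 2 with hp
  have hp_pos : 0 < p := by linarith
  let g : ℝ → ℝ := fun u => u * (besselJ ν (j * u) * besselJ ν (j' * u))
  calc ∫ x in Ioo (0 : ℝ) 1, (x ^ ((1 - α) / 2) * besselJ ν (j * x ^ p)) *
        (x ^ ((1 - α) / 2) * besselJ ν (j' * x ^ p))
      = ∫ x in Ioo (0 : ℝ) 1, p⁻¹ * ((p * x ^ (p - 1)) • g (x ^ p)) := by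
        refine setIntegral_congr_fun measurableSet_Ioo fun x hx => ?_
        have hweight : x ^ ((1 - α) / 2) * x ^ ((1 - α) / 2) = x ^ (p - 1) * x ^ p := by
          rw [← Real.rpow_add hx.1, ← Real.rpow_add hx.1, hp]
          ring_nf
        simp only [g, smul_eq_mul]
        rw [mul_mul_mul_comm, hweight]
        field_simp
    _ = p⁻¹ * ∫ u in Ioo (0 : ℝ) 1, g u := by
        rw [integral_const_mul, integral_Ioo_comp_rpow hp_pos zero_le_one, Real.one_rpow]
    _ = 0 := by
        rw [integral_mul_besselJ_mul_besselJ_eq_zero hν hj hj' hzero hzero' hne, mul_zero]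

/-- For `0 ≤ α < 1`, `ν ≥ 0` and two distinct positive zeros `j ≠ j'` of `J_ν`,
the functions `Φ_j(x) = x^((1-α)/2) J_ν(j x^((2-α)/2))` and
`Φ_{j'}(x) = x^((1-α)/2) J_ν(j' x^((2-α)/2))` are orthogonal in `L²(0,1)`. -/
theorem eigenfunctions_orthogonal (α ν j j' : ℝ) (hα0 : 0 ≤ α) (hα1 : α < 1)
    (hν : 0 ≤ ν) (hj : 0 < j) (hj' : 0 < j')
    (hzero : besselJ ν j = 0) (hzero' : besselJ ν j' = 0) (hne : j ≠ j') :
    (∫ x in Set.Ioo (0 : ℝ) 1,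
      (x ^ ((1 - α) / 2) * besselJ ν (j * x ^ ((2 - α) / 2))) *
      (x ^ ((1 - α) / 2) * besselJ ν (j' * x ^ ((2 - α) / 2)))) = 0 :=
  eigenfunctions_orthogonal_general (by linarith) (by linarith) hj hj' hzero hzero' hne
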